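/- arXiv:2309.12621 — 2 statements merged into one kernel-verified Lean document; each statement's English description precedes it below -/
import Mathlib

section
/- Let N ≤ M be right R-modules and let {K_i}_{i∈Λ} be a family of right R-modules. Then the following are equivalent: N is K_i-dense in M for every i ∈ Λ; N is (⊕_{i∈Λ} K_i)-dense in M; N is (⊕_{i∈Λ} Ẽ(K_i))-dense in M. -/
/- Right `R`-modules are rendered as left `R`-modules (i.e. we work over the
opposite ring), so "`x·r`" becomes "`r • x`". -/

/-- `N ≤ M` is `K`-dense in `M`. -/
def IsRelDense (R : Type*) [Ring R] (K : Type*) [AddCommGroup K] [Module R K]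
    {M : Type*} [AddCommGroup M] [Module R M] (N : Submodule R M) : Prop :=
  ∀ (m : M) (x : K), x ≠ 0 → ∃ r : R, r • m ∈ N ∧ r • x ≠ 0

/-- The rational hull of `M` computed inside `E`. -/
def ratHull (R : Type*) [Ring R] (E : Type*) [AddCommGroup E] [Module R E]
    (M : Submodule R E) : Submodule R E where
  carrier := {x | ∀ ϑ : E →ₗ[R] E, (∀ m ∈ M, ϑ m = 0) → ϑ x = 0}
  add_mem' := by
    intro a b ha hb ϑ h
    simp only [Set.mem_setOf_eq] at *
    rw [map_add, ha ϑ h, hb ϑ h, add_zero]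
  zero_mem' := by
    intro ϑ _
    exact map_zero ϑ
  smul_mem' := by
    intro r x hx ϑ h
    simp only [Set.mem_setOf_eq] at *
    rw [map_smul, hx ϑ h, smul_zero]

/-!
The rational hull of `K` lies between `K` and its injective hull, so `K` is essential in it. Density
passes up an essential extension: for `x ≠ 0` choose `s` with `0 ≠ s • x ∈ K` and test `K`-density
on the pair `s • m`, `s • x`. Density also passes to any module whose nonzero elements are detected
by maps into modules for which it is known, such as a submodule or, via its projections, a direct
sum.
-/

section Density

variable {R M : Type*} [Ring R] [AddCommGroup M] [Module R M] {N : Submodule R M}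

namespace IsRelDense

theorem of_forall_exists_map_ne_zero {ι B : Type*} [AddCommGroup B] [Module R B]
    {A : ι → Type*} [∀ i, AddCommGroup (A i)] [∀ i, Module R (A i)]
    (f : ∀ i, B →ₗ[R] A i) (hf : ∀ x : B, x ≠ 0 → ∃ i, f i x ≠ 0)
    (h : ∀ i, IsRelDense R (A i) N) : IsRelDense R B N := by
  intro m x hx
  obtain ⟨i, hfx⟩ := hf x hx
  obtain ⟨r, hrm, hrx⟩ := h i m (f i x) hfx
  exact ⟨r, hrm, fun h0 ↦ hrx (by rw [← map_smul, h0, map_zero])⟩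

theorem of_injective {A B : Type*} [AddCommGroup A] [Module R A] [AddCommGroup B] [Module R B]
    (f : B →ₗ[R] A) (hf : Function.Injective f) (h : IsRelDense R A N) : IsRelDense R B N :=
  of_forall_exists_map_ne_zero (fun _ : Unit ↦ f)
    (fun _ hx ↦ ⟨(), (map_ne_zero_iff f hf).2 hx⟩) fun _ ↦ h

end IsRelDense

theorem isRelDense_directSum_iff {ι : Type*} {A : ι → Type*} [∀ i, AddCommGroup (A i)]
    [∀ i, Module R (A i)] :
    IsRelDense R (DirectSum ι A) N ↔ ∀ i, IsRelDense R (A i) N := by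
  classical
  refine ⟨fun h i ↦ h.of_injective (DirectSum.lof R ι A i) (DirectSum.of_injective i),
    IsRelDense.of_forall_exists_map_ne_zero (DirectSum.component R ι A) fun x hx ↦ ?_⟩
  by_contra! hx0
  exact hx (DirectSum.ext_component R hx0)

section Essential

variable {E : Type*} [AddCommGroup E] [Module R E] {K L : Submodule R E}

/-- `K` is an essential submodule of `L`, where both are submodules of an ambient module `E`; the
nonzero submodules of `L`, all of which must meet `K`, are taken as submodules of `E`. -/
structure IsEssentialIn (K L : Submodule R E) : Prop where
  le : K ≤ L
  eq_bot_of_inf_eq_bot : ∀ P ≤ L, P ⊓ K = ⊥ → P = ⊥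

theorem IsEssentialIn.exists_smul_mem_ne_zero (hKL : IsEssentialIn K L) {x : E} (hxL : x ∈ L)
    (hx : x ≠ 0) : ∃ s : R, s • x ∈ K ∧ s • x ≠ 0 := by
  have hspan : Submodule.span R {x} ⊓ K ≠ ⊥ := fun hbot ↦ hx <|
    Submodule.span_singleton_eq_bot.1 <|
      hKL.eq_bot_of_inf_eq_bot _ ((Submodule.span_singleton_le_iff_mem x L).2 hxL) hbot
  obtain ⟨y, ⟨hyx, hyK⟩, hy⟩ := Submodule.exists_mem_ne_zero_of_ne_bot hspan
  obtain ⟨s, rfl⟩ := Submodule.mem_span_singleton.1 hyx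
  exact ⟨s, hyK, hy⟩

theorem IsRelDense.of_isEssentialIn (hKL : IsEssentialIn K L) (h : IsRelDense R K N) :
    IsRelDense R L N := by
  rintro m ⟨x, hxL⟩ hx
  obtain ⟨s, hsK, hs⟩ := hKL.exists_smul_mem_ne_zero hxL (by simpa using hx)
  obtain ⟨r, hrm, hrx⟩ := h (s • m) ⟨s • x, hsK⟩ (by simpa using hs)
  exact ⟨r * s, by rwa [mul_smul], by simpa [mul_smul] using hrx⟩

theorem IsEssentialIn.isRelDense_iff (hKL : IsEssentialIn K L) :
    IsRelDense R K N ↔ IsRelDense R L N :=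
  ⟨.of_isEssentialIn hKL,
    .of_injective (Submodule.inclusion hKL.le) (Submodule.inclusion_injective hKL.le)⟩

theorem le_ratHull (K : Submodule R E) : K ≤ ratHull R E K :=
  fun x hx _ hϑ ↦ hϑ x hx

end Essential

theorem stmt13_general {Λ : Type*} {E : Λ → Type*} [∀ i, AddCommGroup (E i)]
    [∀ i, Module R (E i)] {K L : ∀ i, Submodule R (E i)} (hKL : ∀ i, IsEssentialIn (K i) (L i)) :
    ((∀ i, IsRelDense R (K i) N) ↔ IsRelDense R (DirectSum Λ fun i ↦ K i) N) ∧
    ((∀ i, IsRelDense R (K i) N) ↔ IsRelDense R (DirectSum Λ fun i ↦ L i) N) :=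
  ⟨isRelDense_directSum_iff.symm,
    (forall_congr' fun i ↦ (hKL i).isRelDense_iff).trans isRelDense_directSum_iff.symm⟩

end Density

/-- Let `N ≤ M` and let `K i ≤ EK i` be a family of modules
with injective hulls `EK i`. TFAE: `N` is `K i`-dense in `M` for all `i`;
`N` is `⨁ i, K i`-dense in `M`; `N` is `⨁ i, Ẽ(K i)`-dense in `M`. -/
theorem stmt13 (R : Type*) [Ring R] (Λ : Type*)
    (M : Type*) [AddCommGroup M] [Module R M] (N : Submodule R M)
    (EK : Λ → Type*) [∀ i, AddCommGroup (EK i)] [∀ i, Module R (EK i)]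
    (K : ∀ i, Submodule R (EK i))
    (hinj : ∀ i, Module.Injective R (EK i))
    (hess : ∀ i, ∀ P : Submodule R (EK i), P ⊓ K i = ⊥ → P = ⊥) :
    ((∀ i, IsRelDense R ↥(K i) N) ↔
      IsRelDense R (DirectSum Λ (fun i => ↥(K i))) N) ∧
    ((∀ i, IsRelDense R ↥(K i) N) ↔
      IsRelDense R (DirectSum Λ (fun i => ↥(ratHull R (EK i) (K i)))) N) :=
  stmt13_general fun i ↦ ⟨le_ratHull (K i), fun P _ ↦ hess i P⟩
end

section
/- Let M = ⊕_{k∈Λ} M_k be a direct sum of right R-modules, and suppose either R is right noetherian or Λ is a finite index set. Then Ẽ(M) = ⊕_{k∈Λ} Ẽ(M_k) (inside E(M) = ⊕_{k∈Λ} E(M_k)) if and only if M_i is M_j-dense in Ẽ(M_i) for all i, j ∈ Λ. -/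
/- Right `R`-modules are rendered as left `R`-modules (i.e. we work over the
opposite ring), so "`x·r`" becomes "`r • x`" and "right noetherian" becomes
`IsNoetherianRing R`. -/

universe u

/-! A submodule of `⨁ k, E k` of the form `⨁ k, N k` determines its components, and a homomorphism
out of or into `⨁ k, E k` is tested on components. Hence `Ẽ(⨁ k, M k)` is `⨁ k, ⨅ j, H k j`, where
`H k j ≤ E k` consists of the elements killed by every homomorphism `E k → E j` that vanishes
on `M k`. Since `H k k = Ẽ(M k)`, the two sides agree iff `Ẽ(M k) ≤ H k j` for all `k` and `j`, and
because `E j` is an injective hull of `M j` this inclusion says that `M k` is `M j`-dense in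
`Ẽ(M k)`. -/

section Relative

variable {R A B : Type*} [Ring R] [AddCommGroup A] [Module R A] [AddCommGroup B] [Module R B]

variable (B) in
/-- The rational hull of `N` in `A` relative to a module `B`: the largest submodule of `A` on which
every homomorphism `A → B` vanishing on `N` still vanishes. The rational hull `ratHull` is the
case `B = A`; a general `B` allows for the components `E i → E j` of an endomorphism of
`⨁ k, E k`. -/
def relRatHull (N : Submodule R A) : Submodule R A :=
  ⨅ (f : A →ₗ[R] B) (_ : N ≤ LinearMap.ker f), LinearMap.ker f

theorem mem_relRatHull {N : Submodule R A} {x : A} :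
    x ∈ relRatHull B N ↔ ∀ f : A →ₗ[R] B, N ≤ LinearMap.ker f → f x = 0 := by
  simp only [relRatHull, Submodule.mem_iInf, LinearMap.mem_ker]

theorem ratHull_eq_relRatHull (N : Submodule R A) : ratHull R A N = relRatHull A N :=
  Submodule.ext fun _ => mem_relRatHull.symm

theorem exists_smul_mem_ne_zero_of_essential {K : Submodule R B}
    (hK : ∀ L : Submodule R B, L ⊓ K = ⊥ → L = ⊥) {b : B} (hb : b ≠ 0) :
    ∃ r : R, r • b ∈ K ∧ r • b ≠ 0 := by
  have hspan : R ∙ b ⊓ K ≠ ⊥ := mt (hK _) (mt Submodule.span_singleton_eq_bot.mp hb)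
  obtain ⟨y, ⟨hyb, hyK⟩, hy⟩ := Submodule.exists_mem_ne_zero_of_ne_bot hspan
  obtain ⟨r, rfl⟩ := Submodule.mem_span_singleton.mp hyb
  exact ⟨r, hyK, hy⟩

theorem isRelDense_iff_of_essential {K : Submodule R B}
    (hK : ∀ L : Submodule R B, L ⊓ K = ⊥ → L = ⊥) {N : Submodule R A} :
    IsRelDense R K N ↔ IsRelDense R B N := by
  constructor
  · intro hN a b hb
    obtain ⟨s, hsK, hs⟩ := exists_smul_mem_ne_zero_of_essential hK hb
    obtain ⟨r, hrN, hr⟩ := hN (s • a) ⟨s • b, hsK⟩ (by simpa using hs)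
    refine ⟨r * s, by rwa [mul_smul], fun h => hr (Subtype.ext ?_)⟩
    exact (mul_smul r s b).symm.trans h
  · intro hN a b hb
    obtain ⟨r, hrN, hr⟩ := hN a b (by simpa using hb)
    exact ⟨r, hrN, fun h => hr (congrArg Subtype.val h)⟩

theorem exists_linearMap_apply_eq_of_baer (hB : Module.Baer R B) {a : A} {b : B}
    (h : ∀ r : R, r • a = 0 → r • b = 0) : ∃ f : A →ₗ[R] B, f a = b := by
  let g : A →ₗ.[R] B := LinearPMap.mkSpanSingleton' a b h
  obtain ⟨f, hf⟩ := hB.extension_property g.domain.subtype g.domain.injective_subtype g.toFun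
  refine ⟨f, ?_⟩
  have ha : a ∈ g.domain := Submodule.mem_span_singleton_self a
  calc f a = g ⟨a, ha⟩ := LinearMap.congr_fun hf ⟨a, ha⟩
    _ = b := LinearPMap.mkSpanSingleton'_apply_self a b h ha

theorem isRelDense_comap_subtype_iff_le_relRatHull (hB : Module.Baer R B)
    {N H : Submodule R A} :
    IsRelDense R B (N.comap H.subtype) ↔ H ≤ relRatHull B N := by
  constructor
  · intro hN x hx
    refine mem_relRatHull.mpr fun f hf => by_contra fun hfx => ?_
    obtain ⟨r, hrN, hr⟩ := hN ⟨x, hx⟩ (f x) hfx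
    exact hr ((map_smul f r x).symm.trans (hf hrN))
  · intro hH a b hb
    by_contra! hab
    obtain ⟨f, hf⟩ : ∃ f : A ⧸ N →ₗ[R] B, f (N.mkQ a) = b :=
      exists_linearMap_apply_eq_of_baer hB fun r hr =>
        hab r ((Submodule.Quotient.mk_eq_zero N).mp hr)
    have hker : N ≤ LinearMap.ker (f ∘ₗ N.mkQ) := fun n hn => by
      simp [(Submodule.Quotient.mk_eq_zero N).mpr hn]
    exact hb (hf.symm.trans (mem_relRatHull.mp (hH a.2) _ hker))

end Relative

section ComponentwiseSubmodule

open DirectSum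

variable {R Λ : Type*} [Semiring R] [DecidableEq Λ] {E : Λ → Type*}
  [∀ k, AddCommMonoid (E k)] [∀ k, Module R (E k)]

theorem mem_iSup_map_lof {N : ∀ k, Submodule R (E k)} {x : ⨁ k, E k} :
    x ∈ ⨆ k, (N k).map (lof R Λ E k) ↔ ∀ k, x k ∈ N k := by
  classical
  constructor
  · intro hx k
    have hle : ⨆ i, (N i).map (lof R Λ E i) ≤ (N k).comap (component R Λ E k) := by
      refine iSup_le fun i => Submodule.map_le_iff_le_comap.mpr fun z hz => ?_
      rw [Submodule.mem_comap, Submodule.mem_comap, component.of]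
      split_ifs with h
      · subst h; exact hz
      · exact zero_mem _
    exact hle hx
  · intro hx
    rw [← sum_support_of x]
    exact sum_mem fun k _ => Submodule.mem_iSup_of_mem k (Submodule.mem_map_of_mem (hx k))

theorem comap_lof_iSup_map_lof (N : ∀ k, Submodule R (E k)) (k : Λ) :
    (⨆ i, (N i).map (lof R Λ E i)).comap (lof R Λ E k) = N k := by
  ext x
  constructor
  · intro hx
    simpa only [lof_apply] using mem_iSup_map_lof.mp hx k
  · exact fun hx => Submodule.mem_iSup_of_mem k (Submodule.mem_map_of_mem hx)

theorem iSup_map_lof_inj {N N' : ∀ k, Submodule R (E k)} :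
    ⨆ k, (N k).map (lof R Λ E k) = ⨆ k, (N' k).map (lof R Λ E k) ↔ ∀ k, N k = N' k := by
  refine ⟨fun h k => ?_, fun h => iSup_congr fun k => by rw [h k]⟩
  rw [← comap_lof_iSup_map_lof N k, h, comap_lof_iSup_map_lof]

end ComponentwiseSubmodule

section DirectSum

open DirectSum

variable {R Λ : Type*} [Ring R] {E : Λ → Type*} [∀ k, AddCommGroup (E k)] [∀ k, Module R (E k)]

theorem relRatHull_directSum {A : Type*} [AddCommGroup A] [Module R A] (N : Submodule R A) :
    relRatHull (⨁ k, E k) N = ⨅ k, relRatHull (E k) N := by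
  classical
  ext x
  simp only [Submodule.mem_iInf, mem_relRatHull]
  constructor
  · intro hx k f hf
    have hlof : lof R Λ E k (f x) = 0 :=
      hx (lof R Λ E k ∘ₗ f) (hf.trans (LinearMap.ker_le_ker_comp f _))
    exact of_injective k (hlof.trans (map_zero _).symm)
  · exact fun hx f hf => ext_component R fun k =>
      hx k (component R Λ E k ∘ₗ f) (hf.trans (LinearMap.ker_le_ker_comp f _))

variable [DecidableEq Λ]

theorem relRatHull_iSup_map_lof {B : Type*} [AddCommGroup B] [Module R B]
    (N : ∀ k, Submodule R (E k)) :
    relRatHull B (⨆ k, (N k).map (lof R Λ E k)) =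
      ⨆ k, (relRatHull B (N k)).map (lof R Λ E k) := by
  classical
  ext x
  simp only [mem_iSup_map_lof, mem_relRatHull]
  constructor
  · intro hx k f hf
    exact hx (f ∘ₗ component R Λ E k) fun y hy => hf (mem_iSup_map_lof.mp hy k)
  · intro hx f hf
    rw [← sum_support_of x, map_sum]
    refine Finset.sum_eq_zero fun k _ => hx k (f ∘ₗ lof R Λ E k) fun y hy => ?_
    exact hf (Submodule.mem_iSup_of_mem k (Submodule.mem_map_of_mem hy))

theorem ratHull_iSup_map_lof_eq_iff {M : ∀ k, Submodule R (E k)} :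
    ratHull R (⨁ k, E k) (⨆ k, (M k).map (lof R Λ E k)) =
        ⨆ k, (ratHull R (E k) (M k)).map (lof R Λ E k) ↔
      ∀ i j, ratHull R (E i) (M i) ≤ relRatHull (E j) (M i) := by
  rw [ratHull_eq_relRatHull, relRatHull_iSup_map_lof, iSup_map_lof_inj]
  simp only [ratHull_eq_relRatHull, relRatHull_directSum]
  refine forall_congr' fun i => ?_
  rw [← le_iInf_iff]
  exact ⟨fun h => h.ge, fun h => (iInf_le _ i).antisymm h⟩

end DirectSum

theorem stmt15_general {R Λ : Type*} [Ring R] [DecidableEq Λ]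
    {E : Λ → Type*} [∀ k, AddCommGroup (E k)] [∀ k, Module R (E k)]
    (M : ∀ k, Submodule R (E k))
    (hinj : ∀ k, Module.Baer R (E k))
    (hess : ∀ k, ∀ N : Submodule R (E k), N ⊓ M k = ⊥ → N = ⊥) :
    (ratHull R (DirectSum Λ E) (⨆ k, Submodule.map (DirectSum.lof R Λ E k) (M k)) =
        ⨆ k, Submodule.map (DirectSum.lof R Λ E k) (ratHull R (E k) (M k))) ↔
      ∀ i j, IsRelDense R ↥(M j)
        (Submodule.comap (ratHull R (E i) (M i)).subtype (M i)) := by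
  rw [ratHull_iSup_map_lof_eq_iff]
  refine forall₂_congr fun i j => ?_
  rw [isRelDense_iff_of_essential (hess j), isRelDense_comap_subtype_iff_le_relRatHull (hinj j)]

/-- For each `k` let `E k` be an injective hull of
`M k ≤ E k`, and suppose `R` is noetherian or `Λ` is finite (so that
`⨁ k, E k` is an injective hull of `⨁ k, M k`). Then
`Ẽ(⨁ k, M k) = ⨁ k, Ẽ(M k)` (inside `⨁ k, E k`) iff `M i` is `M j`-dense in
`Ẽ(M i)` for all `i, j`. -/
theorem stmt15 (R : Type u) [Ring R] (Λ : Type u) [DecidableEq Λ]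
    (E : Λ → Type u) [∀ k, AddCommGroup (E k)] [∀ k, Module R (E k)]
    (M : ∀ k, Submodule R (E k))
    (hinj : ∀ k, Module.Injective R (E k))
    (hess : ∀ k, ∀ N : Submodule R (E k), N ⊓ M k = ⊥ → N = ⊥)
    (hyp : IsNoetherianRing R ∨ Finite Λ) :
    (ratHull R (DirectSum Λ E) (⨆ k, Submodule.map (DirectSum.lof R Λ E k) (M k)) =
        ⨆ k, Submodule.map (DirectSum.lof R Λ E k) (ratHull R (E k) (M k))) ↔
      ∀ i j, IsRelDense R ↥(M j)
        (Submodule.comap (ratHull R (E i) (M i)).subtype (M i)) :=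
  stmt15_general M (fun k => Module.Baer.of_injective (hinj k)) hess
end
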